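/- Let $G = (V \cup \{\delta\}, E)$ be a finite directed graph where $\delta$ is a cemetery vertex (no outgoing edges, every vertex connected to $\delta$ by a directed path), with no multiple edges, no self-loops, and such that $(x,y) \in E$ with $y \neq \delta$ implies $(y,x) \in E$. Let $(\alpha(e))_{e\in E}$ be positive weights and let $\omega$ be a Dirichlet environment with these parameters. For a fixed vertex $0 \in V$, define $\gamma^\omega(0) = \big(\sum_{\sigma: 0 \to \delta \text{ simple}} \omega_\sigma\big)^{-1}$, where $\omega_\sigma = \prod_{e \in \sigma}\omega(e)$ and the sum is over simple directed paths from $0$ to $\delta$. Then for every $s < \min_A \sum_{e \in \partial_+\underline{A}} \alpha(e)$ — the minimum over strongly connected edge-subsets $A$ with $0 \in \underline{A}$ — one has $E^{(\alpha)}[\gamma^\omega(0)^s] < \infty$. -/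

import Mathlib

open Finset MeasureTheory

/-!
Multiplying the exit probabilities `ω(e)` of each vertex by an independent Gamma variable turns all
of them into independent Gamma variables of shapes `α(e)`: the joint moments agree, and they
determine the law because Gamma variables have exponential moments. By Fubini, `∏ ω(e) ^ (-q e)` is
integrable as soon as `q e < α(e)` for every edge.

The rest is deterministic. Give weight one to the most likely edge `e₀` out of `0`, keep the other
weights, and let `m v` be the largest weight of a path from `v` to `δ`. The superlevel sets of
`-log m` are cuts that contain both ends of `e₀`, so each contains a strongly connected component
through `0` whose exit edges are among those of the cut. If `c < 1` is such that all these cuts have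
`c α`-capacity at least `s`, integrating over the levels yields a simple path `σ` with
`∏ ω(e) ^ (c α(e)) ≤ C ω_σ ^ s`, whence `γ ^ s ≤ C ∏ ω(e) ^ (-c α(e))`.
-/

open ProbabilityTheory

section MomentDeterminacy

lemma eqOn_complexMGF_of_forall_integral_pow_eq {Ω Ω' : Type*} {mΩ : MeasurableSpace Ω}
    {mΩ' : MeasurableSpace Ω'} {μ : Measure Ω} {ν : Measure Ω'} {X : Ω → ℝ} {Y : Ω' → ℝ}
    (hX : 0 ∈ interior (integrableExpSet X μ)) (hY : 0 ∈ interior (integrableExpSet Y ν))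
    (h : ∀ n : ℕ, ∫ ω, X ω ^ n ∂μ = ∫ ω, Y ω ^ n ∂ν) :
    Set.EqOn (complexMGF X μ) (complexMGF Y ν)
      {w | w.re ∈ interior (integrableExpSet X μ) ∩ interior (integrableExpSet Y ν)} := by
  have hX₀ : (0 : ℂ).re ∈ interior (integrableExpSet X μ) := by simpa using hX
  have hY₀ : (0 : ℂ).re ∈ interior (integrableExpSet Y ν) := by simpa using hY
  have hderiv (n : ℕ) :
      iteratedDeriv n (complexMGF X μ) 0 = iteratedDeriv n (complexMGF Y ν) 0 := by
    rw [iteratedDeriv_complexMGF hX₀, iteratedDeriv_complexMGF hY₀]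
    simpa [← Complex.ofReal_pow, integral_complex_ofReal] using congrArg Complex.ofReal (h n)
  have hseriesX := (analyticAt_complexMGF hX₀).hasFPowerSeriesAt
  have hseriesY := (analyticAt_complexMGF hY₀).hasFPowerSeriesAt
  simp only [hderiv] at hseriesX
  refine AnalyticOnNhd.eqOn_of_preconnected_of_eventuallyEq (z₀ := 0)
    (analyticOnNhd_complexMGF.mono fun w hw => hw.1)
    (analyticOnNhd_complexMGF.mono fun w hw => hw.2)
    ((convex_integrableExpSet.interior.inter convex_integrableExpSet.interior).linear_preimage
      Complex.reLm).isPreconnected ⟨hX₀, hY₀⟩ ?_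
  filter_upwards [hseriesX.eventually_hasSum_sub, hseriesY.eventually_hasSum_sub]
    with w hwX hwY using hwX.unique hwY

lemma map_eq_map_of_forall_integral_pow_eq {Ω Ω' : Type*} {mΩ : MeasurableSpace Ω}
    {mΩ' : MeasurableSpace Ω'} {μ : Measure Ω} {ν : Measure Ω'} [IsFiniteMeasure μ]
    [IsFiniteMeasure ν] {X : Ω → ℝ} {Y : Ω' → ℝ}
    (hX : 0 ∈ interior (integrableExpSet X μ)) (hY : 0 ∈ interior (integrableExpSet Y ν))
    (h : ∀ n : ℕ, ∫ ω, X ω ^ n ∂μ = ∫ ω, Y ω ^ n ∂ν) :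
    μ.map X = ν.map Y := by
  refine Measure.ext_of_charFun (funext fun t => ?_)
  rw [← complexMGF_mul_I (aemeasurable_of_mem_interior_integrableExpSet hX),
    ← complexMGF_mul_I (aemeasurable_of_mem_interior_integrableExpSet hY)]
  exact eqOn_complexMGF_of_forall_integral_pow_eq hX hY h (by simpa using ⟨hX, hY⟩)

lemma zero_mem_interior_integrableExpSet_dual {F : Type*} [NormedAddCommGroup F]
    [NormedSpace ℝ F] [MeasurableSpace F] [OpensMeasurableSpace F] {μ : Measure F} {ε : ℝ}
    (hε : 0 < ε) (hμ : Integrable (fun x => Real.exp (ε * ‖x‖)) μ) (L : StrongDual ℝ F) :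
    0 ∈ interior (integrableExpSet L μ) := by
  have hsub : Metric.ball 0 (ε / (‖L‖ + 1)) ⊆ integrableExpSet L μ := fun t ht => by
    have htε : |t| * (‖L‖ + 1) < ε := by
      rwa [mem_ball_zero_iff, Real.norm_eq_abs, lt_div_iff₀ (by positivity)] at ht
    refine hμ.mono' (by fun_prop) (.of_forall fun x => ?_)
    rw [Real.norm_eq_abs, Real.abs_exp, Real.exp_le_exp]
    calc t * L x ≤ |t| * |L x| := by rw [← abs_mul]; exact le_abs_self _
      _ ≤ |t| * ((‖L‖ + 1) * ‖x‖) := by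
        gcongr
        exact (L.le_opNorm x).trans (by gcongr; linarith)
      _ ≤ ε * ‖x‖ := by rw [← mul_assoc]; gcongr
  exact mem_interior_iff_mem_nhds.2 <|
    Filter.mem_of_superset (Metric.ball_mem_nhds 0 (by positivity)) hsub

variable {ι : Type*} [Fintype ι] {μ ν : Measure (ι → ℝ)} [IsFiniteMeasure μ]
  [IsFiniteMeasure ν] {ε : ℝ}

lemma integrable_prod_pow_of_integrable_exp_norm (hε : 0 < ε)
    (hμ : Integrable (fun x => Real.exp (ε * ‖x‖)) μ) (κ : ι → ℕ) :
    Integrable (fun x => ∏ i, x i ^ κ i) μ := by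
  have hneg : Integrable (fun x : ι → ℝ => Real.exp (-ε * ‖x‖)) μ := by
    refine (integrable_const 1).mono' (by fun_prop) (.of_forall fun x => ?_)
    rw [Real.norm_eq_abs, Real.abs_exp, Real.exp_le_one_iff]
    nlinarith [norm_nonneg x]
  refine (integrable_pow_abs_of_integrable_exp_mul hε.ne' hμ hneg (∑ i, κ i)).mono'
    (Measurable.aestronglyMeasurable (by fun_prop)) (.of_forall fun x => ?_)
  rw [abs_norm, norm_prod, ← prod_pow_eq_pow_sum]
  exact prod_le_prod (fun _ _ => norm_nonneg _) fun i _ =>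
    (norm_pow _ _).trans_le (pow_le_pow_left₀ (norm_nonneg _) (norm_le_pi_norm x i) _)

theorem ext_of_forall_integral_prod_pow_eq (hε : 0 < ε)
    (hμ : Integrable (fun x => Real.exp (ε * ‖x‖)) μ)
    (hν : Integrable (fun x => Real.exp (ε * ‖x‖)) ν)
    (h : ∀ κ : ι → ℕ, ∫ x, ∏ i, x i ^ κ i ∂μ = ∫ x, ∏ i, x i ^ κ i ∂ν) :
    μ = ν := by
  classical
  refine Measure.ext_of_charFunDual (funext fun L => ?_)
  rw [charFunDual_eq_charFun_map_one, charFunDual_eq_charFun_map_one,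
    map_eq_map_of_forall_integral_pow_eq (zero_mem_interior_integrableExpSet_dual hε hμ L)
      (zero_mem_interior_integrableExpSet_dual hε hν L) fun n => ?_]
  have hexpand (x : ι → ℝ) : L x ^ n = ∑ κ ∈ univ.piAntidiag n,
      (Nat.multinomial univ κ * ∏ i, L (Pi.single i 1) ^ κ i) * ∏ i, x i ^ κ i := by
    have hL : L x = ∑ i, L (Pi.single i 1) * x i := by
      conv_lhs => rw [pi_eq_sum_univ' x, map_sum]
      simp [mul_comm]
    simp only [hL, sum_pow_eq_sum_piAntidiag, mul_pow, prod_mul_distrib, mul_assoc]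
  simp only [hexpand]
  rw [integral_finsetSum _ fun κ _ =>
      (integrable_prod_pow_of_integrable_exp_norm hε hμ κ).const_mul _,
    integral_finsetSum _ fun κ _ =>
      (integrable_prod_pow_of_integrable_exp_norm hε hν κ).const_mul _]
  simp only [integral_const_mul, h]

end MomentDeterminacy

section Gamma

variable {a r : ℝ}

lemma ae_pos_gammaMeasure : ∀ᵐ x ∂gammaMeasure a r, 0 < x := by
  have hpdf : Measurable (gammaPDF a r) := (measurable_gammaPDFReal a r).ennreal_ofReal
  rw [gammaMeasure, ae_withDensity_iff hpdf]
  filter_upwards [Measure.ae_ne volume 0] with x hx₀ hx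
  exact (not_lt.1 fun hneg => hx (gammaPDF_of_neg hneg)).lt_of_ne' hx₀

lemma gammaPDF_mul_rpow_mul_exp {p θ x : ℝ} (ha : 0 < a) (hr : 0 < r) (hp : 0 < a + p)
    (hθ : θ < r) (hx : x ≠ 0) :
    gammaPDF a r x * ENNReal.ofReal (x ^ p * Real.exp (θ * x)) =
      ENNReal.ofReal (r ^ a / Real.Gamma a * (Real.Gamma (a + p) / (r - θ) ^ (a + p))) *
        gammaPDF (a + p) (r - θ) x := by
  rcases hx.lt_or_gt with hneg | hpos
  · simp [gammaPDF_of_neg hneg]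
  have := Real.Gamma_pos_of_pos ha
  have := Real.Gamma_pos_of_pos hp
  have hrθ : 0 < r - θ := sub_pos.2 hθ
  have hpow : x ^ (a + p - 1) = x ^ (a - 1) * x ^ p := by
    rw [← Real.rpow_add hpos]; ring_nf
  have hexp : Real.exp (-((r - θ) * x)) = Real.exp (-(r * x)) * Real.exp (θ * x) := by
    rw [← Real.exp_add]; ring_nf
  rw [gammaPDF_of_nonneg hpos.le, gammaPDF_of_nonneg hpos.le, ← ENNReal.ofReal_mul (by positivity),
    ← ENNReal.ofReal_mul (by positivity), hpow, hexp]
  congr 1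
  field_simp

lemma lintegral_rpow_mul_exp_gammaMeasure {p θ : ℝ} (ha : 0 < a) (hr : 0 < r) (hp : 0 < a + p)
    (hθ : θ < r) :
    ∫⁻ x, ENNReal.ofReal (x ^ p * Real.exp (θ * x)) ∂gammaMeasure a r =
      ENNReal.ofReal (r ^ a / Real.Gamma a * (Real.Gamma (a + p) / (r - θ) ^ (a + p))) := by
  have hpdf : Measurable (gammaPDF a r) := (measurable_gammaPDFReal a r).ennreal_ofReal
  calc ∫⁻ x, ENNReal.ofReal (x ^ p * Real.exp (θ * x)) ∂gammaMeasure a r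
      = ∫⁻ x, gammaPDF a r x * ENNReal.ofReal (x ^ p * Real.exp (θ * x)) :=
        lintegral_withDensity_eq_lintegral_mul _ hpdf (by fun_prop)
    _ = ∫⁻ x, ENNReal.ofReal (r ^ a / Real.Gamma a * (Real.Gamma (a + p) / (r - θ) ^ (a + p))) *
          gammaPDF (a + p) (r - θ) x := lintegral_congr_ae <|
        (Measure.ae_ne volume 0).mono fun _ => gammaPDF_mul_rpow_mul_exp ha hr hp hθ
    _ = _ := by
      rw [lintegral_const_mul' _ _ ENNReal.ofReal_ne_top,
        lintegral_gammaPDF_eq_one hp (sub_pos.2 hθ), mul_one]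

lemma integral_pow_gammaMeasure (ha : 0 < a) (k : ℕ) :
    ∫ x, x ^ k ∂gammaMeasure a 1 = Real.Gamma (a + k) / Real.Gamma a := by
  have hk : 0 < a + k := by positivity
  have := Real.Gamma_pos_of_pos ha
  have := Real.Gamma_pos_of_pos hk
  rw [integral_eq_lintegral_of_nonneg_ae (ae_pos_gammaMeasure.mono fun x hx => pow_nonneg hx.le k)
    (by fun_prop)]
  have hint := lintegral_rpow_mul_exp_gammaMeasure (θ := 0) ha one_pos hk one_pos
  simp only [Real.rpow_natCast, zero_mul, Real.exp_zero, mul_one] at hint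
  rw [hint, ENNReal.toReal_ofReal (by positivity)]
  simp [div_eq_inv_mul]

lemma integrable_rpow_gammaMeasure {p : ℝ} (ha : 0 < a) (hr : 0 < r) (hp : 0 < a + p) :
    Integrable (fun x => x ^ p) (gammaMeasure a r) := by
  have hint := lintegral_rpow_mul_exp_gammaMeasure (θ := 0) ha hr hp hr
  simp only [zero_mul, Real.exp_zero, mul_one] at hint
  exact (lintegral_ofReal_ne_top_iff_integrable (by fun_prop)
    (ae_pos_gammaMeasure.mono fun x hx => Real.rpow_nonneg hx.le p)).1
    (hint ▸ ENNReal.ofReal_ne_top)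

lemma integrable_exp_mul_abs_gammaMeasure {θ : ℝ} (ha : 0 < a) (hr : 0 < r) (hθ : θ < r) :
    Integrable (fun x => Real.exp (θ * |x|)) (gammaMeasure a r) := by
  have hint := lintegral_rpow_mul_exp_gammaMeasure (p := 0) ha hr (by simpa using ha) hθ
  simp only [Real.rpow_zero, one_mul] at hint
  refine ((lintegral_ofReal_ne_top_iff_integrable (by fun_prop)
    (.of_forall fun x => (Real.exp_pos (θ * x)).le)).1 (hint ▸ ENNReal.ofReal_ne_top)).congr ?_
  filter_upwards [ae_pos_gammaMeasure] with x hx using by rw [abs_of_pos hx]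

end Gamma

section GammaProduct

/-- The law of independent Gamma variables with shapes `a i` and rate `1`. -/
noncomputable def gammaProduct {ι : Type*} [Fintype ι] (a : ι → ℝ) : Measure (ι → ℝ) :=
  Measure.pi fun i => gammaMeasure (a i) 1

variable {ι : Type*} [Fintype ι] {a : ι → ℝ}

lemma isProbabilityMeasure_gammaProduct (ha : ∀ i, 0 < a i) :
    IsProbabilityMeasure (gammaProduct a) := by
  have := fun i => isProbabilityMeasure_gammaMeasure (ha i) one_pos
  unfold gammaProduct
  infer_instance

lemma ae_pos_gammaProduct (ha : ∀ i, 0 < a i) : ∀ᵐ y ∂gammaProduct a, ∀ i, 0 < y i := by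
  have := fun i => isProbabilityMeasure_gammaMeasure (ha i) one_pos
  exact ae_all_iff.2 fun i =>
    (measurePreserving_eval _ i).quasiMeasurePreserving.ae ae_pos_gammaMeasure

lemma integral_prod_pow_gammaProduct (ha : ∀ i, 0 < a i) (κ : ι → ℕ) :
    ∫ y, ∏ i, y i ^ κ i ∂gammaProduct a =
      ∏ i, Real.Gamma (a i + κ i) / Real.Gamma (a i) := by
  have := fun i => isProbabilityMeasure_gammaMeasure (ha i) one_pos
  rw [gammaProduct, integral_fintype_prod_eq_prod fun i y => y ^ κ i]
  exact prod_congr rfl fun i _ => integral_pow_gammaMeasure (ha i) (κ i)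

lemma integrable_prod_rpow_gammaProduct {p : ι → ℝ} (ha : ∀ i, 0 < a i)
    (hp : ∀ i, 0 < a i + p i) :
    Integrable (fun y => ∏ i, y i ^ p i) (gammaProduct a) := by
  have := fun i => isProbabilityMeasure_gammaMeasure (ha i) one_pos
  exact Integrable.fintype_prod fun i => integrable_rpow_gammaMeasure (ha i) one_pos (hp i)

lemma integrable_exp_norm_gammaProduct (ha : ∀ i, 0 < a i) :
    Integrable (fun y => Real.exp (2⁻¹ * ‖y‖)) (gammaProduct a) := by
  have := fun i => isProbabilityMeasure_gammaMeasure (ha i) one_pos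
  refine (Integrable.fintype_prod fun i =>
    integrable_exp_mul_abs_gammaMeasure (ha i) one_pos (by norm_num : (2⁻¹ : ℝ) < 1)).mono'
    (by fun_prop) (.of_forall fun y => ?_)
  rw [Real.norm_eq_abs, Real.abs_exp, ← Real.exp_sum, ← mul_sum]
  gcongr
  exact (pi_norm_le_iff_of_nonneg (sum_nonneg fun i _ => abs_nonneg (y i))).2 fun i =>
    single_le_sum (f := fun i => |y i|) (fun j _ => abs_nonneg (y j)) (mem_univ i)

end GammaProduct

section Dirichlet

/-- The random vectors `(X ω i)_{b i = v}`, one for each block `v`, are independent and Dirichlet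
distributed with parameters `(α i)_{b i = v}`. The law is prescribed through its joint moments,
which determine it since `X` is bounded. -/
structure IsDirichletFamily {Ω ι β : Type*} {mΩ : MeasurableSpace Ω} [Fintype ι] [Fintype β]
    [DecidableEq β] (b : ι → β) (α : ι → ℝ) (X : Ω → ι → ℝ) (P : Measure Ω) : Prop where
  measurable : Measurable X
  pos : ∀ᵐ ω ∂P, ∀ i, 0 < X ω i
  sum_eq_one : ∀ᵐ ω ∂P, ∀ v, ∑ i with b i = v, X ω i = 1
  integral_prod_pow : ∀ κ : ι → ℕ, ∫ ω, ∏ i, X ω i ^ κ i ∂P =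
    ∏ v, (Real.Gamma (∑ i with b i = v, α i) /
        Real.Gamma (∑ i with b i = v, α i + ∑ i with b i = v, (κ i : ℝ)) *
      ∏ i with b i = v, Real.Gamma (α i + κ i) / Real.Gamma (α i))

namespace IsDirichletFamily

variable {Ω ι β : Type*} {mΩ : MeasurableSpace Ω} [Fintype ι] [Fintype β] [DecidableEq β]
  {b : ι → β} {α : ι → ℝ} {X : Ω → ι → ℝ} {P : Measure Ω}

lemma ae_le_one (h : IsDirichletFamily b α X P) : ∀ᵐ ω ∂P, ∀ i, X ω i ≤ 1 := by
  filter_upwards [h.pos, h.sum_eq_one] with ω hpos hsum i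
  exact hsum (b i) ▸ single_le_sum (fun j _ => (hpos j).le) (mem_filter.2 ⟨mem_univ i, rfl⟩)

variable [IsProbabilityMeasure P]

lemma sum_block_pos (h : IsDirichletFamily b α X P) (hα : ∀ i, 0 < α i) (v : β) :
    0 < ∑ i with b i = v, α i := by
  obtain ⟨ω, hω⟩ := h.sum_eq_one.exists
  exact sum_pos (fun i _ => hα i) (nonempty_of_sum_ne_zero ((hω v).trans_ne one_ne_zero))

lemma integral_prod_mul_pow (h : IsDirichletFamily b α X P) (hα : ∀ i, 0 < α i) (κ : ι → ℕ) :
    ∫ p, ∏ i, (p.2 (b i) * X p.1 i) ^ κ i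
        ∂P.prod (gammaProduct fun v => ∑ i with b i = v, α i) =
      ∏ i, Real.Gamma (α i + κ i) / Real.Gamma (α i) := by
  have ha := h.sum_block_pos hα
  have := isProbabilityMeasure_gammaProduct ha
  have hsplit (p : Ω × (β → ℝ)) : ∏ i, (p.2 (b i) * X p.1 i) ^ κ i =
      (∏ i, X p.1 i ^ κ i) * ∏ v, p.2 v ^ ∑ i with b i = v, κ i := by
    simp only [mul_pow, prod_mul_distrib, mul_comm (∏ i, X p.1 i ^ κ i),
      ← prod_fiberwise univ b (fun i => p.2 (b i) ^ κ i), ← prod_pow_eq_pow_sum]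
    congr 1
    exact prod_congr rfl fun v _ => prod_congr rfl fun i hi => by rw [(mem_filter.1 hi).2]
  simp only [hsplit]
  rw [integral_prod_mul (fun ω => ∏ i, X ω i ^ κ i)
      (fun y : β → ℝ => ∏ v, y v ^ ∑ i with b i = v, κ i),
    integral_prod_pow_gammaProduct ha, h.integral_prod_pow, ← prod_mul_distrib,
    ← prod_fiberwise univ b]
  refine prod_congr rfl fun v _ => ?_
  have hΓ := (Real.Gamma_pos_of_pos (ha v)).ne'
  have hΓκ : Real.Gamma (∑ i with b i = v, α i + ∑ i with b i = v, (κ i : ℝ)) ≠ 0 :=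
    (Real.Gamma_pos_of_pos (add_pos_of_pos_of_nonneg (ha v) (by positivity))).ne'
  push_cast
  field_simp

theorem map_mul_eq_gammaProduct (h : IsDirichletFamily b α X P) (hα : ∀ i, 0 < α i) :
    (P.prod (gammaProduct fun v => ∑ i with b i = v, α i)).map
      (fun p i => p.2 (b i) * X p.1 i) = gammaProduct α := by
  have ha := h.sum_block_pos hα
  have := isProbabilityMeasure_gammaProduct ha
  have := isProbabilityMeasure_gammaProduct hα
  have hX := h.measurable
  have hmeas : Measurable fun (p : Ω × (β → ℝ)) i => p.2 (b i) * X p.1 i := by fun_prop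
  refine ext_of_forall_integral_prod_pow_eq (ε := 2⁻¹) (by norm_num) ?_
    (integrable_exp_norm_gammaProduct hα) fun κ => ?_
  · rw [integrable_map_measure (by fun_prop) hmeas.aemeasurable]
    refine ((integrable_exp_norm_gammaProduct ha).comp_snd P).mono'
      (Measurable.comp (by fun_prop) hmeas).aestronglyMeasurable ?_
    filter_upwards [Measure.quasiMeasurePreserving_fst.ae h.pos,
      Measure.quasiMeasurePreserving_fst.ae h.ae_le_one] with p hpos hle
    rw [Function.comp_apply, Real.norm_eq_abs, Real.abs_exp]
    gcongr
    refine (pi_norm_le_iff_of_nonneg (norm_nonneg _)).2 fun i => ?_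
    rw [norm_mul, Real.norm_of_nonneg (hpos i).le]
    exact (mul_le_of_le_one_right (norm_nonneg _) (hle i)).trans (norm_le_pi_norm p.2 (b i))
  · rw [integral_map hmeas.aemeasurable (Measurable.aestronglyMeasurable (by fun_prop)),
      h.integral_prod_mul_pow hα, integral_prod_pow_gammaProduct hα]

theorem integrable_prod_rpow (h : IsDirichletFamily b α X P) (hα : ∀ i, 0 < α i) {p : ι → ℝ}
    (hp : ∀ i, 0 < α i + p i) :
    Integrable (fun ω => ∏ i, X ω i ^ p i) P := by
  have ha := h.sum_block_pos hα
  have := isProbabilityMeasure_gammaProduct ha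
  have hX := h.measurable
  have hint := integrable_prod_rpow_gammaProduct hα hp
  rw [← h.map_mul_eq_gammaProduct hα,
    integrable_map_measure (Measurable.aestronglyMeasurable (by fun_prop)) (by fun_prop)] at hint
  obtain ⟨y, hy_int, hy_pos⟩ := (hint.prod_left_ae.and (ae_pos_gammaProduct ha)).exists
  have hc : ∏ i, y (b i) ^ p i ≠ 0 :=
    (prod_pos fun i _ => Real.rpow_pos_of_pos (hy_pos (b i)) _).ne'
  rw [← integrable_const_mul_iff (isUnit_iff_ne_zero.2 hc)]
  refine hy_int.congr ?_
  filter_upwards [h.pos] with ω hω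
  rw [Function.comp_apply, ← prod_mul_distrib]
  exact prod_congr rfl fun i _ => Real.mul_rpow (hy_pos (b i)).le (hω i).le

end IsDirichletFamily

end Dirichlet

section Graph

variable {U : Type*} {A E : Finset (U × U)} {u v δ : U} {e : U × U} {l : List (U × U)}

/-- `l` is the list of edges of a directed walk from `u` to `v`, of length at least one, whose
edges lie in `A`. -/
def IsWalk (A : Finset (U × U)) (u v : U) (l : List (U × U)) : Prop :=
  l ≠ [] ∧ (∀ e ∈ l, e ∈ A) ∧ l.IsChain (fun e f => e.2 = f.1) ∧
    l.head?.map Prod.fst = some u ∧ l.getLast?.map Prod.snd = some v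

/-- `l` is the list of edges of a directed path from `u` to `v` in `E`, of length at least one, that
leaves no vertex twice. -/
def IsSimplePath (E : Finset (U × U)) (u v : U) (l : List (U × U)) : Prop :=
  l ≠ [] ∧ (∀ e ∈ l, e ∈ E) ∧ l.IsChain (fun e f => e.2 = f.1) ∧
    l.head?.map Prod.fst = some u ∧ l.getLast?.map Prod.snd = some v ∧ (l.map Prod.fst).Nodup

/-- The same notion as `IsSimplePath E v δ l`, with the empty path from `δ` to `δ` allowed, in
the recursive form suited to shortening paths. -/
inductive IsSimplePathTo (E : Finset (U × U)) (δ : U) : U → List (U × U) → Prop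
  | nil : IsSimplePathTo E δ δ []
  | cons {u v : U} {l : List (U × U)} (huv : (u, v) ∈ E) (hnot_mem : u ∉ l.map Prod.fst)
      (hl : IsSimplePathTo E δ v l) : IsSimplePathTo E δ u ((u, v) :: l)

namespace IsWalk

lemma single (he : e ∈ A) : IsWalk A e.1 e.2 [e] := by
  simp [IsWalk, he]

lemma cons (he : e ∈ A) (h : IsWalk A e.2 v l) : IsWalk A e.1 v (e :: l) := by
  obtain ⟨hne, hmem, hchain, hhead, hlast⟩ := h
  obtain ⟨f, l, rfl⟩ := List.exists_cons_of_ne_nil hne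
  simp_all [IsWalk]

lemma exists_of_transGen (h : Relation.TransGen (fun a b => (a, b) ∈ A) u v) :
    ∃ l, IsWalk A u v l := by
  induction h using Relation.TransGen.head_induction_on with
  | single h => exact ⟨_, single h⟩
  | head h _ ih => exact ih.imp' _ fun _ => cons h

end IsWalk

namespace IsSimplePathTo

lemma mem (h : IsSimplePathTo E δ v l) : ∀ e ∈ l, e ∈ E := by
  induction h with
  | nil => simp
  | cons he _ _ ih => exact List.forall_mem_cons.2 ⟨he, ih⟩

lemma nodup_map_fst (h : IsSimplePathTo E δ v l) : (l.map Prod.fst).Nodup := by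
  induction h with
  | nil => simp
  | cons _ hnot_mem _ ih => exact List.nodup_cons.2 ⟨hnot_mem, ih⟩

lemma isWalk (h : IsSimplePathTo E δ v l) (hne : l ≠ []) : IsWalk E v δ l := by
  induction h with
  | nil => exact absurd rfl hne
  | cons huv _ hl ih =>
    cases hl with
    | nil => exact .single huv
    | cons => exact (ih (by simp)).cons huv

lemma isSimplePath (h : IsSimplePathTo E δ v l) (hv : v ≠ δ) : IsSimplePath E v δ l := by
  have hne : l ≠ [] := by rintro rfl; cases h; exact hv rfl
  obtain ⟨hne, hmem, hchain, hhead, hlast⟩ := h.isWalk hne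
  exact ⟨hne, hmem, hchain, hhead, hlast, h.nodup_map_fst⟩

lemma exists_suffix (h : IsSimplePathTo E δ v l) (hu : u ∈ l.map Prod.fst) :
    ∃ l', l' <:+ l ∧ IsSimplePathTo E δ u l' := by
  induction h with
  | nil => simp at hu
  | cons huv hnot_mem hl ih =>
    obtain rfl | hu := List.mem_cons.1 hu
    · exact ⟨_, List.suffix_rfl, hl.cons huv hnot_mem⟩
    · obtain ⟨l', hl', h⟩ := ih hu
      exact ⟨l', hl'.trans (List.suffix_cons _ _), h⟩

lemma exists_suffix_cons (h : IsSimplePathTo E δ e.2 l) (he : e ∈ E) :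
    ∃ l', l' <:+ e :: l ∧ IsSimplePathTo E δ e.1 l' := by
  by_cases hmem : e.1 ∈ l.map Prod.fst
  · obtain ⟨l', hl', h'⟩ := h.exists_suffix hmem
    exact ⟨l', hl'.trans (List.suffix_cons e l), h'⟩
  · exact ⟨_, List.suffix_rfl, h.cons he hmem⟩

end IsSimplePathTo

lemma IsWalk.exists_isSimplePathTo (h : IsWalk E v δ l) : ∃ l', IsSimplePathTo E δ v l' := by
  induction l generalizing v with
  | nil => exact absurd rfl h.1
  | cons e l ih =>
    obtain ⟨-, hmem, hchain, hhead, hlast⟩ := h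
    obtain ⟨he, hmem⟩ := List.forall_mem_cons.1 hmem
    have htail : ∃ l', IsSimplePathTo E δ e.2 l' := by
      cases l with
      | nil => exact ⟨[], by simp_all [IsSimplePathTo.nil]⟩
      | cons f l => exact ih (by simp_all [IsWalk])
    obtain ⟨l', hl'⟩ := htail
    obtain ⟨l'', -, hl''⟩ := hl'.exists_suffix_cons he
    have hv : e.1 = v := by simpa using hhead
    exact ⟨l'', hv ▸ hl''⟩

lemma finite_setOf_nodup_map_fst [Finite U] :
    {l : List (U × U) | (l.map Prod.fst).Nodup}.Finite := by
  have := Fintype.ofFinite U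
  refine (List.finite_length_le (U × U) (Fintype.card U)).subset fun l hl => ?_
  simpa using List.Nodup.length_le_card hl

end Graph

section MinCut

/-- A discrete coarea inequality: integrate over the levels `t` the total weight of the indices
whose interval `[g e, f e)` contains `t`. -/
theorem mul_le_sum_mul_of_forall_level {ι : Type*} (E : Finset ι) {f g u x : ι → ℝ} {s D : ℝ}
    (hs : 0 ≤ s) (hx : ∀ e ∈ E, 0 ≤ x e) (hu : ∀ e ∈ E, 0 ≤ u e)
    (hfg : ∀ e ∈ E, f e - g e ≤ u e)
    (hlevel : ∀ t, 0 ≤ t → t < D → s ≤ ∑ e ∈ E with g e ≤ t ∧ t < f e, x e) :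
    s * D ≤ ∑ e ∈ E, x e * u e := by
  have hxu : ∀ e ∈ E, 0 ≤ x e * u e := fun e he => mul_nonneg (hx e he) (hu e he)
  rw [← ENNReal.ofReal_le_ofReal_iff (sum_nonneg hxu)]
  calc ENNReal.ofReal (s * D)
      = ∫⁻ _ in Set.Ico 0 D, ENNReal.ofReal s := by
        rw [setLIntegral_const, Real.volume_Ico, sub_zero, ENNReal.ofReal_mul hs]
    _ ≤ ∫⁻ t in Set.Ico 0 D,
          ∑ e ∈ E, ENNReal.ofReal (x e) * (Set.Ico (g e) (f e)).indicator 1 t := by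
        refine setLIntegral_mono' measurableSet_Ico fun t ht => ?_
        refine (ENNReal.ofReal_le_ofReal (hlevel t ht.1 ht.2)).trans_eq ?_
        rw [ENNReal.ofReal_sum_of_nonneg fun e he => hx e (mem_filter.1 he).1, sum_filter]
        simp [Set.indicator_apply]
    _ ≤ ∫⁻ t, ∑ e ∈ E, ENNReal.ofReal (x e) * (Set.Ico (g e) (f e)).indicator 1 t :=
        setLIntegral_le_lintegral _ _
    _ = ∑ e ∈ E, ENNReal.ofReal (x e) * ENNReal.ofReal (f e - g e) := by
        rw [lintegral_finsetSum _ fun e _ =>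
          (measurable_one.indicator measurableSet_Ico).const_mul _]
        simp_rw [lintegral_const_mul' _ _ ENNReal.ofReal_ne_top,
          lintegral_indicator_one measurableSet_Ico, Real.volume_Ico]
    _ ≤ ∑ e ∈ E, ENNReal.ofReal (x e * u e) := by
        refine sum_le_sum fun e he => ?_
        rw [ENNReal.ofReal_mul (hx e he)]
        gcongr
        exact hfg e he
    _ = ENNReal.ofReal (∑ e ∈ E, x e * u e) := (ENNReal.ofReal_sum_of_nonneg hxu).symm

variable {U : Type*} {E : Finset (U × U)} {z δ : U} {w x : U × U → ℝ} {s : ℝ}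

lemma prod_map_le_of_suffix {l l' : List (U × U)} (h : l' <:+ l)
    (hw : ∀ e ∈ l, w e ∈ Set.Icc 0 1) : (l.map w).prod ≤ (l'.map w).prod := by
  induction l with
  | nil => rw [List.suffix_nil.1 h]
  | cons e l ih =>
    obtain rfl | h := List.suffix_cons_iff.1 h
    · rfl
    · obtain ⟨he, hl⟩ := List.forall_mem_cons.1 hw
      have hnonneg : 0 ≤ (l.map w).prod :=
        List.prod_nonneg (List.forall_mem_map.2 fun f hf => (hl f hf).1)
      rw [List.map_cons, List.prod_cons]
      exact (mul_le_of_le_one_left hnonneg he.2).trans (ih h hl)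

namespace IsSimplePathTo

variable {v : U} {e : U × U} {l : List (U × U)}

lemma prod_pos (h : IsSimplePathTo E δ v l) (hw : ∀ e ∈ E, 0 < w e) : 0 < (l.map w).prod :=
  List.prod_pos <| List.forall_mem_map.2 fun e he => hw e (h.mem e he)

lemma exists_mul_prod_le (h : IsSimplePathTo E δ e.2 l) (he : e ∈ E)
    (hw : ∀ e ∈ E, w e ∈ Set.Ioc 0 1) :
    ∃ l', IsSimplePathTo E δ e.1 l' ∧ w e * (l.map w).prod ≤ (l'.map w).prod := by
  obtain ⟨l', hsuffix, hl'⟩ := h.exists_suffix_cons he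
  refine ⟨l', hl', ?_⟩
  rw [← List.prod_cons, ← List.map_cons]
  refine prod_map_le_of_suffix hsuffix fun f hf => Set.Ioc_subset_Icc_self (hw f ?_)
  exact List.forall_mem_cons.2 ⟨he, h.mem⟩ f hf

lemma exists_forall_prod_le [Finite U] (hpath : ∃ l, IsSimplePathTo E δ v l) (w : U × U → ℝ) :
    ∃ l, IsSimplePathTo E δ v l ∧
      ∀ l', IsSimplePathTo E δ v l' → (l'.map w).prod ≤ (l.map w).prod :=
  Set.exists_max_image {l | IsSimplePathTo E δ v l} (fun l => (l.map w).prod)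
    (finite_setOf_nodup_map_fst.subset fun _ hl => hl.nodup_map_fst) hpath

end IsSimplePathTo

variable [DecidableEq U]

/-- The edges of `E` that exit `K`, denoted `∂₊K` in the paper. -/
def outBoundary (E : Finset (U × U)) (K : Finset U) : Finset (U × U) :=
  E.filter fun e => e.1 ∈ K ∧ e.2 ∉ K

/-- A weak form of min-cut duality, in multiplicative form: if every cut `K` that no edge of
weight one exits has capacity at least `s`, some path has a large weight. The cuts used are the
superlevel sets of `v ↦ -log (m v)`, where `m v` is the largest weight of a path from `v`. -/
theorem exists_isSimplePathTo_prod_rpow_le [Finite U] (hpath : ∀ v, ∃ l, IsSimplePathTo E δ v l)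
    (hw : ∀ e ∈ E, w e ∈ Set.Ioc 0 1) (hx : ∀ e ∈ E, 0 ≤ x e) (hs : 0 ≤ s)
    (hcut : ∀ K, z ∈ K → δ ∉ K → (∀ e ∈ E, w e = 1 → e.1 ∈ K → e.2 ∈ K) →
      s ≤ ∑ e ∈ outBoundary E K, x e) :
    ∃ l, IsSimplePathTo E δ z l ∧ ∏ e ∈ E, w e ^ x e ≤ (l.map w).prod ^ s := by
  have := Fintype.ofFinite U
  choose σ hσ hmax using fun v => IsSimplePathTo.exists_forall_prod_le (hpath v) w
  set m : U → ℝ := fun v => ((σ v).map w).prod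
  have hm (v : U) : 0 < m v := (hσ v).prod_pos fun e he => (hw e he).1
  have hδ : 1 ≤ m δ := by simpa using hmax δ [] .nil
  have hmul : ∀ e ∈ E, w e * m e.2 ≤ m e.1 := fun e he =>
    let ⟨l, hl, hle⟩ := (hσ e.2).exists_mul_prod_le he hw
    hle.trans (hmax e.1 l hl)
  have hcoarea : s * -Real.log (m z) ≤ ∑ e ∈ E, x e * -Real.log (w e) := by
    refine mul_le_sum_mul_of_forall_level (f := fun e => -Real.log (m e.1))
      (g := fun e => -Real.log (m e.2)) E hs hx (fun e he => ?_) (fun e he => ?_) fun t ht₀ ht => ?_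
    · exact neg_nonneg.2 (Real.log_nonpos (hw e he).1.le (hw e he).2)
    · have := Real.log_le_log (mul_pos (hw e he).1 (hm e.2)) (hmul e he)
      rw [Real.log_mul (hw e he).1.ne' (hm e.2).ne'] at this
      linarith
    · refine (hcut {v | t < -Real.log (m v)} ?_ ?_ fun e he hwe => ?_).trans_eq ?_
      · simpa using ht
      · simpa using (neg_nonpos.2 (Real.log_nonneg hδ)).trans ht₀
      · have := Real.log_le_log (hm e.2) (by simpa [hwe] using hmul e he)
        simp only [mem_filter, mem_univ, true_and]
        exact fun h => h.trans_le (neg_le_neg this)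
      · simp [outBoundary, and_comm]
  refine ⟨σ z, hσ z, ?_⟩
  have hlog : ∑ e ∈ E, Real.log (w e) * x e ≤ Real.log (m z) * s := by
    simp only [mul_neg, sum_neg_distrib, neg_le_neg_iff] at hcoarea
    simpa only [mul_comm] using hcoarea
  calc ∏ e ∈ E, w e ^ x e = Real.exp (∑ e ∈ E, Real.log (w e) * x e) := by
        rw [Real.exp_sum]
        exact prod_congr rfl fun e he => Real.rpow_def_of_pos (hw e he).1 _
    _ ≤ Real.exp (Real.log (m z) * s) := Real.exp_le_exp.2 hlog
    _ = m z ^ s := (Real.rpow_def_of_pos (hm z) s).symm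

lemma mul_prod_map_update_one_le {ι : Type*} [DecidableEq ι] {η : ι → ℝ} {l : List ι} {i : ι}
    (hl : l.Nodup) (hη : ∀ j ∈ l, 0 ≤ η j) (hi : η i ≤ 1) :
    η i * (l.map (Function.update η i 1)).prod ≤ (l.map η).prod := by
  have hupdate {l : List ι} (hil : i ∉ l) : l.map (Function.update η i 1) = l.map η :=
    List.map_congr_left fun j hj => Function.update_of_ne (ne_of_mem_of_not_mem hj hil) _ _
  by_cases hil : i ∈ l
  · rw [← List.prod_map_erase _ hil, ← List.prod_map_erase η hil,
      hupdate hl.not_mem_erase, Function.update_self, one_mul]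
  · rw [hupdate hil]
    exact mul_le_of_le_one_left (List.prod_nonneg (List.forall_mem_map.2 hη)) hi

/-- Giving the edge `e₀` weight one forces the cuts to contain its head. -/
theorem exists_isSimplePathTo_rpow_mul_prod_rpow_le [Finite U]
    (hpath : ∀ v, ∃ l, IsSimplePathTo E δ v l) {η : U × U → ℝ} (hη : ∀ e ∈ E, η e ∈ Set.Ioc 0 1)
    (hx : ∀ e ∈ E, 0 ≤ x e) (hs : 0 ≤ s) {e₀ : U × U} (he₀ : e₀ ∈ E)
    (hcut : ∀ K, e₀.1 ∈ K → e₀.2 ∈ K → δ ∉ K → s ≤ ∑ e ∈ outBoundary E K, x e) :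
    ∃ l, IsSimplePathTo E δ e₀.1 l ∧ η e₀ ^ s * ∏ e ∈ E, η e ^ x e ≤ (l.map η).prod ^ s := by
  set w := Function.update η e₀ 1
  have hw : ∀ e ∈ E, w e ∈ Set.Ioc 0 1 ∧ η e ≤ w e := fun e he => by
    obtain rfl | hne := eq_or_ne e e₀
    · simp [w, (hη e he).2]
    · simp [w, hne, (hη e he).1, (hη e he).2]
  have hw01 : ∀ e ∈ E, w e ∈ Set.Ioc 0 1 := fun e he => (hw e he).1
  obtain ⟨l, hl, hle⟩ := exists_isSimplePathTo_prod_rpow_le hpath hw01 hx hs fun K h₁ hδ h =>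
    hcut K h₁ (h e₀ he₀ (Function.update_self ..) h₁) hδ
  have hprod := (hl.prod_pos fun e he => (hw01 e he).1).le
  have hηl := mul_prod_map_update_one_le (η := η) (i := e₀) hl.nodup_map_fst.of_map
    (fun e he => (hη e (hl.mem e he)).1.le) (hη e₀ he₀).2
  refine ⟨l, hl, ?_⟩
  calc η e₀ ^ s * ∏ e ∈ E, η e ^ x e
      ≤ η e₀ ^ s * (l.map w).prod ^ s := by
        have := (hη e₀ he₀).1
        refine mul_le_mul_of_nonneg_left (le_trans ?_ hle) (by positivity)
        exact prod_le_prod (fun e he => Real.rpow_nonneg (hη e he).1.le _) fun e he =>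
          Real.rpow_le_rpow (hη e he).1.le (hw e he).2 (hx e he)
    _ = (η e₀ * (l.map w).prod) ^ s := (Real.mul_rpow (hη e₀ he₀).1.le hprod).symm
    _ ≤ (l.map η).prod ^ s :=
        Real.rpow_le_rpow (mul_nonneg (hη e₀ he₀).1.le hprod) hηl hs

end MinCut

section StronglyConnected

variable {U : Type*} [DecidableEq U] {A E : Finset (U × U)} {K : Finset U} {e₀ : U × U} {z δ : U}

/-- Any vertex of an edge of `A` is joined to any other by a directed walk in `A`. -/
def IsStronglyConnected (A : Finset (U × U)) : Prop :=
  ∀ u ∈ A.image Prod.fst ∪ A.image Prod.snd, ∀ v ∈ A.image Prod.fst ∪ A.image Prod.snd,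
    ∃ l, IsWalk A u v l

lemma isStronglyConnected_of_symm (hsym : ∀ e ∈ A, e.swap ∈ A) (he₀ : e₀ ∈ A)
    (hreach : ∀ e ∈ A, Relation.ReflTransGen (fun a b => (a, b) ∈ A) e₀.1 e.1) :
    IsStronglyConnected A := by
  have hreach' : ∀ u ∈ A.image Prod.fst ∪ A.image Prod.snd,
      Relation.ReflTransGen (fun a b => (a, b) ∈ A) e₀.1 u := fun u hu => by
    obtain hu | hu := mem_union.1 hu <;> obtain ⟨e, he, rfl⟩ := mem_image.1 hu
    · exact hreach e he
    · exact hreach e.swap (hsym e he)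
  have hloop : Relation.TransGen (fun a b => (a, b) ∈ A) e₀.1 e₀.1 :=
    .head (b := e₀.2) he₀ (.single (hsym e₀ he₀))
  have : Std.Symm fun a b => (a, b) ∈ A := ⟨fun a b h => hsym (a, b) h⟩
  intro u hu v hv
  have hback : Relation.ReflTransGen (fun a b => (a, b) ∈ A) u e₀.1 :=
    Relation.ReflTransGen.stdSymm.symm _ _ (hreach' u hu)
  exact IsWalk.exists_of_transGen ((hloop.trans_right hback).trans_left (hreach' v hv))

/-- The witness is the set of edges of the connected component of `e₀` inside `K`. -/
theorem exists_isStronglyConnected_outBoundary_subset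
    (hsym : ∀ e ∈ E, e.2 ≠ δ → (e.2, e.1) ∈ E) (hK : δ ∉ K) (he₀ : e₀ ∈ E) (h₁ : e₀.1 ∈ K)
    (h₂ : e₀.2 ∈ K) :
    ∃ A ⊆ E, IsStronglyConnected A ∧ e₀.1 ∈ A.image Prod.fst ∧
      outBoundary E (A.image Prod.fst) ⊆ outBoundary E K := by
  classical
  let R : U → U → Prop := fun a b => (a, b) ∈ E ∧ a ∈ K ∧ b ∈ K
  have hR : ∀ a b, R a b → R b a := fun a b h =>
    ⟨hsym _ h.1 (ne_of_mem_of_not_mem h.2.2 hK), h.2.2, h.2.1⟩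
  let A := E.filter fun e => R e.1 e.2 ∧ Relation.ReflTransGen R e₀.1 e.1
  have hA {a b : U} (hab : R a b) (ha : Relation.ReflTransGen R e₀.1 a) : (a, b) ∈ A :=
    mem_filter.2 ⟨hab.1, hab, ha⟩
  have he₀A : e₀ ∈ A := hA ⟨he₀, h₁, h₂⟩ .refl
  have hreach {a : U} (ha : Relation.ReflTransGen R e₀.1 a) :
      Relation.ReflTransGen (fun a b => (a, b) ∈ A) e₀.1 a := by
    induction ha with
    | refl => exact .refl
    | tail ha hab ih => exact ih.tail (hA hab ha)
  refine ⟨A, filter_subset _ _, isStronglyConnected_of_symm (fun e he => ?_) he₀A fun e he =>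
    hreach (mem_filter.1 he).2.2, mem_image_of_mem _ he₀A, fun e he => ?_⟩
  · obtain ⟨-, hRe, hz⟩ := mem_filter.1 he
    exact hA (hR _ _ hRe) (hz.tail hRe)
  · obtain ⟨heE, htail, hhead⟩ := mem_filter.1 he
    obtain ⟨f, hf, hfe⟩ := mem_image.1 htail
    obtain ⟨-, hRf, hz⟩ := mem_filter.1 hf
    rw [hfe] at hRf hz
    refine mem_filter.2 ⟨heE, hRf.2.1, fun heK => hhead ?_⟩
    have hRe : R e.1 e.2 := ⟨heE, hRf.2.1, heK⟩
    exact mem_image_of_mem Prod.fst (hA (hR _ _ hRe) (hz.tail hRe))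

end StronglyConnected

section Acceleration

variable {U : Type*} {E : Finset (U × U)} {z δ : U} {η α : U × U → ℝ} {s : ℝ}

/-- The acceleration function `γ^η(u) = (∑_σ η_σ)⁻¹`, the sum being over the simple paths `σ`
from `u` to `v` in `E` and `η_σ` being the product of `η` over the edges of `σ`. -/
noncomputable def acceleration (E : Finset (U × U)) (u v : U) (η : U × U → ℝ) : ℝ :=
  (∑' p : {l // IsSimplePath E u v l}, (p.1.map η).prod)⁻¹

lemma finite_isSimplePath [Finite U] : Finite {l // IsSimplePath E z δ l} :=
  (finite_setOf_nodup_map_fst.subset fun _ hl => hl.2.2.2.2.2).to_subtype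

lemma acceleration_rpow_le [Finite U] (hη : ∀ e ∈ E, 0 < η e) {l : List (U × U)}
    (hl : IsSimplePath E z δ l) (hs : 0 ≤ s) :
    acceleration E z δ η ^ s ≤ ((l.map η).prod ^ s)⁻¹ := by
  have := finite_isSimplePath (E := E) (z := z) (δ := δ)
  have hpos {l} (hl : IsSimplePath E z δ l) : 0 < (l.map η).prod :=
    List.prod_pos <| List.forall_mem_map.2 fun e he => hη e (hl.2.1 e he)
  have hle : (l.map η).prod ≤ ∑' p : {l // IsSimplePath E z δ l}, (p.1.map η).prod :=
    (Summable.of_finite).le_tsum (⟨l, hl⟩ : {l // IsSimplePath E z δ l}) fun p _ => (hpos p.2).le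
  rw [← Real.inv_rpow (hpos hl).le]
  exact Real.rpow_le_rpow (inv_nonneg.2 ((hpos hl).le.trans hle)) (inv_anti₀ (hpos hl) hle) hs

lemma acceleration_rpow_le_card [Finite U] (hη : ∀ e ∈ E, η e ∈ Set.Icc 0 1) (hs : s ≤ 0) :
    acceleration E z δ η ^ s ≤ (Nat.card {l // IsSimplePath E z δ l} : ℝ) ^ (-s) := by
  have := finite_isSimplePath (E := E) (z := z) (δ := δ)
  have := Fintype.ofFinite {l // IsSimplePath E z δ l}
  have hnonneg : 0 ≤ ∑' p : {l // IsSimplePath E z δ l}, (p.1.map η).prod :=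
    tsum_nonneg fun p => List.prod_nonneg <| List.forall_mem_map.2 fun e he =>
      (hη e (p.2.2.1 e he)).1
  have hle : ∑' p : {l // IsSimplePath E z δ l}, (p.1.map η).prod ≤
      Nat.card {l // IsSimplePath E z δ l} := by
    rw [tsum_fintype, Nat.card_eq_fintype_card, Fintype.card_eq_sum_ones, Nat.cast_sum]
    gcongr with p
    simpa using prod_map_le_of_suffix List.nil_suffix fun e he => hη e (p.2.2.1 e he)
  rw [acceleration, Real.inv_rpow hnonneg, ← Real.rpow_neg hnonneg]
  exact Real.rpow_le_rpow hnonneg hle (neg_nonneg.2 hs)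

lemma exists_inv_card_le {ι : Type*} {E : Finset ι} {p : ι → Prop} [DecidablePred p] {η : ι → ℝ}
    (hη : ∑ e ∈ E with p e, η e = 1) : ∃ e ∈ E, p e ∧ (#E : ℝ)⁻¹ ≤ η e := by
  have hne : (E.filter p).Nonempty := nonempty_of_sum_ne_zero (hη.trans_ne one_ne_zero)
  have hcard : ∑ _e ∈ E with p _e, (#E : ℝ)⁻¹ ≤ ∑ e ∈ E with p e, η e := by
    rw [hη, sum_const, nsmul_eq_mul, ← div_eq_mul_inv]
    exact div_le_one_of_le₀ (mod_cast card_filter_le E p) (Nat.cast_nonneg _)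
  obtain ⟨e, he, hle⟩ := exists_le_of_sum_le hne hcard
  exact ⟨e, (mem_filter.1 he).1, (mem_filter.1 he).2, hle⟩

lemma exists_mem_Ioo_forall_le_mul {κ : Type*} {S : Set κ} (hS : S.Finite) {f : κ → ℝ}
    (hf : ∀ k ∈ S, s < f k) : ∃ c ∈ Set.Ioo (0 : ℝ) 1, ∀ k ∈ S, s ≤ c * f k := by
  have hev : ∀ᶠ c : ℝ in nhdsWithin 1 (Set.Iio 1), ∀ k ∈ S, s ≤ c * f k := by
    refine (Filter.eventually_all_finite hS).2 fun k hk => ?_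
    have hlim : Filter.Tendsto (fun c => c * f k) (nhds 1) (nhds (f k)) := by
      simpa using (continuous_mul_const (f k)).tendsto 1
    exact nhdsWithin_le_nhds ((hlim.eventually_const_lt (hf k hk)).mono fun _ => le_of_lt)
  obtain ⟨c, hc, hc01⟩ := (hev.and (Ioo_mem_nhdsLT one_pos)).exists
  exact ⟨c, hc01, hc⟩

variable [DecidableEq U]

theorem exists_acceleration_rpow_le_of_pos [Finite U] (hz : z ≠ δ)
    (hsym : ∀ e ∈ E, e.2 ≠ δ → (e.2, e.1) ∈ E) (hpath : ∀ v, ∃ l, IsSimplePathTo E δ v l)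
    (hα : ∀ e ∈ E, 0 < α e) (hs₀ : 0 < s)
    (hs : ∀ A ⊆ E, IsStronglyConnected A → z ∈ A.image Prod.fst →
      s < ∑ e ∈ outBoundary E (A.image Prod.fst), α e) :
    ∃ c ∈ Set.Ioo (0 : ℝ) 1, ∀ η : U × U → ℝ, (∀ e ∈ E, η e ∈ Set.Ioc 0 1) →
      ∑ e ∈ E with e.1 = z, η e = 1 →
      acceleration E z δ η ^ s ≤ (#E : ℝ) ^ s * ∏ e ∈ E, η e ^ (-(c * α e)) := by
  let S : Set (Finset U) := {K | δ ∉ K ∧ ∃ e ∈ E, e.1 = z ∧ e.1 ∈ K ∧ e.2 ∈ K}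
  have hS : ∀ K ∈ S, s < ∑ e ∈ outBoundary E K, α e := by
    rintro K ⟨hδ, e₀, he₀, rfl, h₁, h₂⟩
    obtain ⟨A, hAE, hA, hzA, hsub⟩ :=
      exists_isStronglyConnected_outBoundary_subset hsym hδ he₀ h₁ h₂
    exact (hs A hAE hA hzA).trans_le <| sum_le_sum_of_subset_of_nonneg hsub fun e he _ =>
      (hα e (mem_filter.1 he).1).le
  obtain ⟨c, hc, hcS⟩ := exists_mem_Ioo_forall_le_mul S.toFinite hS
  refine ⟨c, hc, fun η hη hsum => ?_⟩
  obtain ⟨e₀, he₀, rfl, hle₀⟩ := exists_inv_card_le hsum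
  obtain ⟨l, hl, hle⟩ := exists_isSimplePathTo_rpow_mul_prod_rpow_le (x := fun e => c * α e) hpath
    hη (fun e he => (mul_pos hc.1 (hα e he)).le) hs₀.le he₀ fun K h₁ h₂ hδ => by
      simpa only [mul_sum] using hcS K ⟨hδ, e₀, he₀, rfl, h₁, h₂⟩
  have hcard : (0 : ℝ) < #E := mod_cast card_pos.2 ⟨e₀, he₀⟩
  have hprod : 0 < ∏ e ∈ E, η e ^ (c * α e) :=
    prod_pos fun e he => Real.rpow_pos_of_pos (hη e he).1 _
  calc acceleration E e₀.1 δ η ^ s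
      ≤ ((l.map η).prod ^ s)⁻¹ :=
        acceleration_rpow_le (fun e he => (hη e he).1) (hl.isSimplePath hz) hs₀.le
    _ ≤ ((#E : ℝ)⁻¹ ^ s * ∏ e ∈ E, η e ^ (c * α e))⁻¹ := by
        refine inv_anti₀ (by positivity) (le_trans ?_ hle)
        gcongr
    _ = (#E : ℝ) ^ s * ∏ e ∈ E, η e ^ (-(c * α e)) := by
        rw [mul_inv, Real.inv_rpow hcard.le, inv_inv, ← prod_inv_distrib]
        congr 1
        exact prod_congr rfl fun e he => (Real.rpow_neg (hη e he).1.le _).symm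

/-- For `s ≤ 0` no edge weight is needed, as `γ ^ s` is bounded. -/
theorem exists_acceleration_rpow_le [Finite U] (hz : z ≠ δ)
    (hsym : ∀ e ∈ E, e.2 ≠ δ → (e.2, e.1) ∈ E) (hpath : ∀ v, ∃ l, IsSimplePathTo E δ v l)
    (hα : ∀ e ∈ E, 0 < α e)
    (hs : ∀ A ⊆ E, IsStronglyConnected A → z ∈ A.image Prod.fst →
      s < ∑ e ∈ outBoundary E (A.image Prod.fst), α e) :
    ∃ C : ℝ, ∃ c ∈ Set.Ico (0 : ℝ) 1, ∀ η : U × U → ℝ, (∀ e ∈ E, η e ∈ Set.Ioc 0 1) →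
      ∑ e ∈ E with e.1 = z, η e = 1 →
      acceleration E z δ η ^ s ≤ C * ∏ e ∈ E, η e ^ (-(c * α e)) := by
  obtain hs₀ | hs₀ := le_or_gt s 0
  · refine ⟨(Nat.card {l // IsSimplePath E z δ l} : ℝ) ^ (-s), 0, by simp, fun η hη _ => ?_⟩
    simpa using acceleration_rpow_le_card (fun e he => Set.Ioc_subset_Icc_self (hη e he)) hs₀
  · obtain ⟨c, hc, h⟩ := exists_acceleration_rpow_le_of_pos hz hsym hpath hα hs₀ hs
    exact ⟨_, c, Set.Ioo_subset_Ico_self hc, h⟩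

end Acceleration

section Environment

variable {V : Type*} {E : Finset (Option V × Option V)}

/-- The tail of an edge, as an element of `V`, in a graph where no edge exits the cemetery. -/
def edgeTail (hcem : ∀ e ∈ E, e.1 ≠ none) (e : E) : V :=
  e.1.1.get (Option.isSome_iff_ne_none.2 (hcem e e.2))

variable [DecidableEq V] {hcem : ∀ e ∈ E, e.1 ≠ none}

@[to_additive]
lemma prod_filter_edgeTail {M : Type*} [CommMonoid M] (f : Option V × Option V → M) (v : V) :
    ∏ e : E with edgeTail hcem e = v, f e = ∏ e ∈ E with e.1 = some v, f e := by
  have hedgeTail (e : E) : edgeTail hcem e = v ↔ e.1.1 = some v := by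
    rw [edgeTail, ← Option.some_inj, Option.some_get]
  simp only [prod_filter, hedgeTail, prod_coe_sort E fun e => if e.1 = some v then f e else 1]

variable [Fintype V]

lemma isDirichletFamily_of_integral_prod_pow {α : Option V × Option V → ℝ}
    {μ : Measure ((Option V × Option V) → ℝ)}
    (hsupp : ∀ᵐ η ∂μ, (∀ e ∈ E, 0 < η e ∧ η e ≤ 1) ∧
      ∀ v : V, ∑ e ∈ E with e.1 = some v, η e = 1)
    (hmom : ∀ κ : (Option V × Option V) → ℕ, ∫ η, ∏ e ∈ E, η e ^ κ e ∂μ =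
      ∏ v : V, ((Real.Gamma (∑ e ∈ E with e.1 = some v, α e) /
          Real.Gamma ((∑ e ∈ E with e.1 = some v, α e) + ∑ e ∈ E with e.1 = some v, (κ e : ℝ))) *
        ∏ e ∈ E with e.1 = some v, Real.Gamma (α e + κ e) / Real.Gamma (α e))) :
    IsDirichletFamily (edgeTail hcem) (fun e => α e) (fun η e => η e) μ where
  measurable := by fun_prop
  pos := hsupp.mono fun η hη e => (hη.1 e e.2).1
  sum_eq_one := hsupp.mono fun η hη v => (sum_filter_edgeTail η v).trans (hη.2 v)
  integral_prod_pow κ := by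
    obtain ⟨κ, rfl⟩ : ∃ κ' : (Option V × Option V) → ℕ, (fun e : E => κ' e) = κ :=
      ⟨Function.extend (↑) κ 0, funext (Subtype.val_injective.extend_apply κ 0)⟩
    simpa only [← prod_coe_sort E, ← prod_filter_edgeTail (hcem := hcem),
      ← sum_filter_edgeTail (hcem := hcem)] using hmom κ

end Environment

theorem stmt12_general {V Ω : Type*} {mΩ : MeasurableSpace Ω} [Fintype V] [DecidableEq V]
    (E : Finset (Option V × Option V)) (z : V) (hcem : ∀ e ∈ E, e.1 ≠ none)
    (hsym : ∀ e ∈ E, e.2 ≠ none → (e.2, e.1) ∈ E)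
    (hconn : ∀ v : V, ∃ l, IsWalk E (some v) none l)
    (α : Option V × Option V → ℝ) (hα : ∀ e ∈ E, 0 < α e) (P : Measure Ω) [IsProbabilityMeasure P]
    (X : Ω → Option V × Option V → ℝ)
    (hX : IsDirichletFamily (edgeTail hcem) (fun e => α e) (fun ω e => X ω e) P) (s : ℝ)
    (hs : ∀ A ⊆ E, IsStronglyConnected A → some z ∈ A.image Prod.fst →
      s < ∑ e ∈ outBoundary E (A.image Prod.fst), α e) :
    ∫⁻ ω, ENNReal.ofReal (acceleration E (some z) none (X ω) ^ s) ∂P < ⊤ := by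
  have hpath (v : Option V) : ∃ l, IsSimplePathTo E none v l :=
    v.rec ⟨[], .nil⟩ fun v => (hconn v).elim fun _ hl => hl.exists_isSimplePathTo
  obtain ⟨C, c, ⟨-, hc₁⟩, hbound⟩ :=
    exists_acceleration_rpow_le (Option.some_ne_none z) hsym hpath hα hs
  have hint : Integrable (fun ω => ∏ e : E, X ω e ^ (-(c * α e))) P :=
    hX.integrable_prod_rpow (fun e => hα e e.2) fun e => by nlinarith [hα e e.2]
  refine (lintegral_mono_ae ?_).trans_lt (hint.const_mul C).lintegral_lt_top
  filter_upwards [hX.pos, hX.ae_le_one, hX.sum_eq_one] with ω hpos hle hsum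
  refine ENNReal.ofReal_le_ofReal ?_
  rw [prod_coe_sort E fun e => X ω e ^ (-(c * α e))]
  exact hbound (X ω) (fun e he => ⟨hpos ⟨e, he⟩, hle ⟨e, he⟩⟩)
    ((sum_filter_edgeTail (X ω) z).symm.trans (hsum z))

/-- Finite moments of the acceleration function for a Dirichlet environment on a finite
directed graph with cemetery vertex `δ`: for every
`s < min { ∑_{e ∈ ∂₊(underline A)} α(e) : A strongly connected, 0 ∈ underline A }`,
`E^{(α)}[γ^ω(0)^s] < ∞`, where `γ^ω(0)⁻¹ = ∑_{σ : 0 → δ simple} ω_σ`. -/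
theorem stmt12 {V : Type*} [Fintype V] [DecidableEq V]
    (E : Finset (Option V × Option V)) (z : V)
    (hcem : ∀ e ∈ E, e.1 ≠ none)                  -- no edge exits the cemetery `none`
    (hnoloop : ∀ e ∈ E, e.1 ≠ e.2)                 -- no elementary loops
    (hsym : ∀ e ∈ E, e.2 ≠ none → (e.2, e.1) ∈ E)  -- symmetry away from the cemetery
    -- every vertex is connected to the cemetery by a directed path of edges of `E`
    (hconn : ∀ v : V, ∃ l : List (Option V × Option V), l ≠ [] ∧ (∀ e ∈ l, e ∈ E) ∧
      l.Chain' (fun e f => e.2 = f.1) ∧ l.head?.map Prod.fst = some (some v) ∧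
      l.getLast?.map Prod.snd = some none)
    (α : Option V × Option V → ℝ) (hα : ∀ e ∈ E, 0 < α e)
    (μ : Measure ((Option V × Option V) → ℝ)) [IsProbabilityMeasure μ]
    -- `μ` is supported on elliptic environments
    (hsupp : ∀ᵐ η ∂μ, (∀ e ∈ E, 0 < η e ∧ η e ≤ 1) ∧
      ∀ v : V, ∑ e ∈ E.filter (fun e => e.1 = some v), η e = 1)
    -- `μ` is the Dirichlet distribution with parameters `α`: joint moments at each
    -- vertex are those of independent Dirichlet vectors
    (hmom : ∀ κ : (Option V × Option V) → ℕ,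
      (∫ η, ∏ e ∈ E, η e ^ κ e ∂μ) =
        ∏ v : V,
          ((Real.Gamma (∑ e ∈ E.filter (fun e => e.1 = some v), α e) /
            Real.Gamma ((∑ e ∈ E.filter (fun e => e.1 = some v), α e) +
              ∑ e ∈ E.filter (fun e => e.1 = some v), (κ e : ℝ))) *
          ∏ e ∈ E.filter (fun e => e.1 = some v),
            Real.Gamma (α e + κ e) / Real.Gamma (α e)))
    (s : ℝ)
    -- `s` is smaller than the weight exiting every strongly connected edge-set
    -- containing `z` among its tails
    (hs : ∀ A : Finset (Option V × Option V), A ⊆ E →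
      (∀ u ∈ A.image Prod.fst ∪ A.image Prod.snd, ∀ v ∈ A.image Prod.fst ∪ A.image Prod.snd,
        ∃ l : List (Option V × Option V), l ≠ [] ∧ (∀ e ∈ l, e ∈ A) ∧
          l.Chain' (fun e f => e.2 = f.1) ∧ l.head?.map Prod.fst = some u ∧
          l.getLast?.map Prod.snd = some v) →
      some z ∈ A.image Prod.fst →
      s < ∑ e ∈ E.filter (fun e => e.1 ∈ A.image Prod.fst ∧ e.2 ∉ A.image Prod.fst), α e) :
    -- simple paths from `z` to the cemetery
    let SimplePath : List (Option V × Option V) → Prop := fun l =>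
      l ≠ [] ∧ (∀ e ∈ l, e ∈ E) ∧ l.Chain' (fun e f => e.2 = f.1) ∧
        l.head?.map Prod.fst = some (some z) ∧ l.getLast?.map Prod.snd = some none ∧
        (l.map Prod.fst).Nodup
    let γ : ((Option V × Option V) → ℝ) → ℝ := fun η =>
      (∑' p : {l : List (Option V × Option V) // SimplePath l},
        ((p : List (Option V × Option V)).map η).prod)⁻¹
    ∫⁻ η, ENNReal.ofReal ((γ η) ^ s) ∂μ < ⊤ := by
  exact stmt12_general E z hcem hsym hconn α hα μ id
    (isDirichletFamily_of_integral_prod_pow hsupp hmom) s hs
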